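/- arXiv:2201.09286 — 5 statements merged into one kernel-verified Lean document; each statement's English description precedes it below -/
import Mathlib

section
/- Let V be a finite set, A : V → ℝ, and f a partial function from V to V (each vertex has at most one successor) such that A(v) < A(f(v)) whenever f(v) is defined. Consider the undirected graph on V whose edges are the pairs {v, f(v)} for v with f(v) defined. Then every connected component of this graph contains exactly one vertex v at which f is undefined. -/
/-! Existence: a vertex maximizing `A` on a component has no successor, since a successor would
be an adjacent vertex of larger value. Uniqueness: if `r` has no successor, then following
successors from any vertex connected to `r` leads to `r` (`reflTransGen_of_walk`); a second vertex
without successor in the component is therefore `r` itself. -/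

/-- Because successors are unique, crossing an edge in either direction preserves the
property that the successor path ends at `r`, which has no successor. -/
theorem reflTransGen_of_walk {V : Type*} {f : V → Option V} {G : SimpleGraph V}
    (hG : ∀ v w : V, G.Adj v w → f v = some w ∨ f w = some v)
    {u r : V} (p : G.Walk u r) (hr : f r = none) :
    Relation.ReflTransGen (fun v w => f v = some w) u r := by
  induction p with
  | nil => exact .refl
  | @cons u w r h p ih =>
    rcases hG _ _ h with h1 | h1
    · exact .head h1 (ih hr)
    · rcases (ih hr).cases_head with rfl | ⟨x, hx, hxr⟩
      · simp [hr] at h1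
      · obtain rfl : x = u := by simpa [hx] using h1
        exact hxr

/-- Lemma 3.1 (abstract form): if every vertex `v` has at most one successor `f v`, of
strictly larger value `A (f v) > A v`, then every connected component of the undirected
graph with edges `{v, f v}` contains exactly one vertex with no successor (a unique local
maximum per superpixel). -/
theorem unique_local_max_per_component
    {V : Type*} [Fintype V] (A : V → ℝ) (f : V → Option V)
    (hf : ∀ v w : V, f v = some w → A v < A w)
    (G : SimpleGraph V)
    (hG : ∀ v w : V, G.Adj v w ↔ (v ≠ w ∧ (f v = some w ∨ f w = some v))) :
    ∀ comp : G.ConnectedComponent,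
      ∃! v : V, G.connectedComponentMk v = comp ∧ f v = none := by
  intro comp
  induction comp using SimpleGraph.ConnectedComponent.ind with
  | h u =>
  obtain ⟨r, hr, hmax⟩ := Set.exists_max_image {v | G.connectedComponentMk v = G.connectedComponentMk u}
    A (Set.toFinite _) ⟨u, rfl⟩
  have hr' : G.connectedComponentMk r = G.connectedComponentMk u := hr
  have hnone : f r = none := by
    cases h : f r with
    | none => rfl
    | some w =>
      have hlt := hf r w h
      have hadj : G.Adj r w := (hG r w).2 ⟨fun e => by simp [e] at hlt, .inl h⟩
      have hw : G.connectedComponentMk w = G.connectedComponentMk u :=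
        (SimpleGraph.ConnectedComponent.sound hadj.reachable.symm).trans hr'
      exact absurd (hmax w hw) (not_le.2 hlt)
  refine ⟨r, ⟨hr', hnone⟩, ?_⟩
  rintro s ⟨hs, hsn⟩
  obtain ⟨p⟩ := SimpleGraph.ConnectedComponent.exact (hs.trans hr'.symm)
  rcases (reflTransGen_of_walk (fun v w h => ((hG v w).1 h).2) p hnone).cases_head with h | ⟨x, hx, _⟩
  · exact h
  · simp [hsn] at hx
end

section
/- Let k_s ≥ 5 be a real number and set Δ = (1 + 2·Σ_{u∈ℤ, 1 ≤ u ≤ 3k_s} exp(−u²/(2k_s²)))². Then (2k_s + 1)² ≤ Δ ≤ (5k_s + 2)²/4. -/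
open Real

/-!
Write `g t = exp (-t²/2)` and `S` for the sum, whose terms are the values `g (u / ks)`. Since `g` is
antitone on `[0, ∞)`, comparing `S` with integrals gives
`ks * ∫ t in (1/ks)..3, g t ≤ S ≤ ks * ∫ t in 0..3, g t`. The theorem amounts to
`ks ≤ S ≤ (5/4) ks`, so it is enough that `6/5 ≤ ∫ t in 0..3, g t ≤ 5/4`: the part of the integral
over `[0, 1/ks]` is at most `1/ks ≤ 1/5`.

The upper bound `5/4` is tight (the integral is about `1.24993`), while the integral over the whole
half-line is `√(π/2) ≈ 1.25331`. The missing tail is controlled by Mills-ratio type estimates: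
`x ↦ ∫ t in 0..x, g t + x/(x²+1) * g x` is increasing and `x ↦ ∫ t in 0..x, g t + g x` is
decreasing for `x ≥ 1`; both have limit `√(π/2)` at infinity, and evaluating them at `x = 3` bounds
the integral from above and below.
-/

/-- The unnormalized standard Gaussian density. -/
noncomputable def gauss (t : ℝ) : ℝ := Real.exp (-(1 / 2) * t ^ 2)

lemma gauss_continuous : Continuous gauss := by unfold gauss; fun_prop

lemma gauss_pos (x : ℝ) : 0 < gauss x := Real.exp_pos _

lemma gauss_le_one (x : ℝ) : gauss x ≤ 1 := by
  unfold gauss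
  rw [Real.exp_le_one_iff]
  nlinarith [sq_nonneg x]

lemma gauss_hasDerivAt (x : ℝ) : HasDerivAt gauss (-x * gauss x) x := by
  have h : HasDerivAt (fun t : ℝ => -(1 / 2) * t ^ 2) (-x) x := by
    refine ((hasDerivAt_pow 2 x).const_mul (-(1 / 2) : ℝ)).congr_deriv ?_
    push_cast
    ring
  refine h.exp.congr_deriv ?_
  unfold gauss
  ring

lemma gauss_antitone {a b : ℝ} (ha : 0 ≤ a) (hab : a ≤ b) : gauss b ≤ gauss a := by
  unfold gauss
  rw [Real.exp_le_exp]
  nlinarith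

lemma gauss_intervalIntegrable (a b : ℝ) :
    IntervalIntegrable gauss MeasureTheory.volume a b :=
  gauss_continuous.intervalIntegrable a b

lemma gauss_integral_hasDerivAt (x : ℝ) :
    HasDerivAt (fun x => ∫ t in (0 : ℝ)..x, gauss t) (gauss x) x :=
  intervalIntegral.integral_hasDerivAt_right (gauss_intervalIntegrable 0 x)
    (gauss_continuous.stronglyMeasurableAtFilter _ _) gauss_continuous.continuousAt

lemma gauss_integral_tendsto :
    Filter.Tendsto (fun x => ∫ t in (0 : ℝ)..x, gauss t) Filter.atTop
      (nhds (√(π / (1 / 2)) / 2)) := by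
  rw [← integral_gaussian_Ioi (1 / 2)]
  exact MeasureTheory.intervalIntegral_tendsto_integral_Ioi 0
    (integrable_exp_neg_mul_sq (by norm_num)).integrableOn Filter.tendsto_id

lemma gauss_tendsto_zero : Filter.Tendsto gauss Filter.atTop (nhds 0) := by
  unfold gauss
  refine Real.tendsto_exp_atBot.comp ?_
  exact (Filter.tendsto_pow_atTop (by norm_num)).const_mul_atTop_of_neg (by norm_num)

lemma gauss_integral_add_mills_le :
    (∫ t in (0 : ℝ)..3, gauss t) + 3 / 10 * gauss 3 ≤ √(π / (1 / 2)) / 2 := by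
  have hder : ∀ x : ℝ, HasDerivAt
      (fun x => (∫ t in (0 : ℝ)..x, gauss t) + x / (x ^ 2 + 1) * gauss x)
      (2 * gauss x / (x ^ 2 + 1) ^ 2) x := by
    intro x
    have hne : x ^ 2 + 1 ≠ 0 := by positivity
    refine ((gauss_integral_hasDerivAt x).add (((hasDerivAt_id' x).fun_div
      ((hasDerivAt_pow 2 x).add_const 1) hne).fun_mul (gauss_hasDerivAt x))).congr_deriv ?_
    field_simp
    push_cast
    ring
  have hmono : Monotone
      (fun x => (∫ t in (0 : ℝ)..x, gauss t) + x / (x ^ 2 + 1) * gauss x) :=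
    monotone_of_hasDerivAt_nonneg hder fun x => by
      have := gauss_pos x
      simp only [Pi.zero_apply]
      positivity
  have hlim : Filter.Tendsto (fun x : ℝ => x / (x ^ 2 + 1) * gauss x) Filter.atTop (nhds 0) := by
    refine squeeze_zero' ?_ ?_ gauss_tendsto_zero
    · filter_upwards [Filter.eventually_ge_atTop 0] with x hx
      have := gauss_pos x
      positivity
    · refine Filter.Eventually.of_forall fun x => ?_
      have h1 : x / (x ^ 2 + 1) ≤ 1 := by
        rw [div_le_one (by positivity)]
        nlinarith [sq_nonneg (x - 1)]
      nlinarith [gauss_pos x]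
  have htend := gauss_integral_tendsto.add hlim
  rw [add_zero] at htend
  have := hmono.ge_of_tendsto htend 3
  norm_num at this ⊢
  exact this

lemma le_gauss_integral_add :
    √(π / (1 / 2)) / 2 ≤ (∫ t in (0 : ℝ)..3, gauss t) + gauss 3 := by
  have hder : ∀ x : ℝ, HasDerivAt (fun x => (∫ t in (0 : ℝ)..x, gauss t) + gauss x)
      (gauss x + -x * gauss x) x :=
    fun x => (gauss_integral_hasDerivAt x).add (gauss_hasDerivAt x)
  have hanti : AntitoneOn (fun x => (∫ t in (0 : ℝ)..x, gauss t) + gauss x) (Set.Ici 1) := by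
    refine antitoneOn_of_deriv_nonpos (convex_Ici 1)
      (fun x _ => (hder x).continuousAt.continuousWithinAt)
      (fun x _ => (hder x).differentiableAt.differentiableWithinAt) fun x hx => ?_
    rw [interior_Ici, Set.mem_Ioi] at hx
    rw [(hder x).deriv]
    nlinarith [gauss_pos x]
  have htend := gauss_integral_tendsto.add gauss_tendsto_zero
  rw [add_zero] at htend
  refine le_of_tendsto htend ?_
  filter_upwards [Filter.eventually_ge_atTop 3] with x hx
  exact hanti (by norm_num) (by simp only [Set.mem_Ici]; linarith) hx

lemma gauss_three_sq : gauss 3 ^ 2 * Real.exp 1 ^ 9 = 1 := by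
  unfold gauss
  rw [← Real.exp_nat_mul, ← Real.exp_nat_mul, ← Real.exp_add, Real.exp_eq_one_iff]
  norm_num

lemma gauss_three_lower : 0.01109 ≤ gauss 3 := by
  by_contra! h
  have h0 := gauss_pos 3
  have h1 : gauss 3 ^ 2 ≤ 0.01109 ^ 2 := by gcongr
  have h2 : Real.exp 1 ^ 9 ≤ 2.7183 ^ 9 := by
    gcongr
    linarith [Real.exp_one_lt_d9]
  have h3 := mul_le_mul h1 h2 (by positivity) (by positivity)
  rw [gauss_three_sq] at h3
  norm_num at h3

lemma gauss_three_upper : gauss 3 ≤ 0.02 := by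
  by_contra! h
  have h1 : (0.02 : ℝ) ^ 2 ≤ gauss 3 ^ 2 := by gcongr
  have h2 : (2.7 : ℝ) ^ 9 ≤ Real.exp 1 ^ 9 := by
    gcongr
    linarith [Real.exp_one_gt_d9]
  have h3 := mul_le_mul h1 h2 (by positivity) (by positivity)
  rw [gauss_three_sq] at h3
  norm_num at h3

lemma gauss_integral_upper : ∫ t in (0 : ℝ)..3, gauss t ≤ 5 / 4 := by
  have h : √(π / (1 / 2)) ≤ 2.50665 := by
    rw [Real.sqrt_le_left (by norm_num)]
    linarith [Real.pi_lt_d4]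
  linarith [gauss_integral_add_mills_le, gauss_three_lower]

lemma gauss_integral_lower : 6 / 5 ≤ ∫ t in (0 : ℝ)..3, gauss t := by
  have h : 2.5 ≤ √(π / (1 / 2)) := by
    apply Real.le_sqrt_of_sq_le
    linarith [Real.pi_gt_d4]
  linarith [le_gauss_integral_add, gauss_three_upper]

lemma sum_Icc_int_eq (f : ℝ → ℝ) (n : ℕ) :
    ∑ u ∈ Finset.Icc (1 : ℤ) n, f u = ∑ i ∈ Finset.range n, f (i + 1) := by
  symm
  refine Finset.sum_bij (fun i _ => (i : ℤ) + 1) ?_ ?_ ?_ ?_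
  · intro i hi
    simp only [Finset.mem_range, Finset.mem_Icc] at *
    omega
  · intro i _ j _ h
    omega
  · intro u hu
    simp only [Finset.mem_Icc] at hu
    exact ⟨(u - 1).toNat, by simp only [Finset.mem_range]; omega, by omega⟩
  · intro i _
    push_cast
    rfl

/-- The terms are written as values of `gauss`, and the sum is compared with integrals. -/
lemma sum_bounds (ks : ℝ) (hks : 5 ≤ ks) :
    ks ≤ ∑ u ∈ Finset.Icc (1 : ℤ) ⌊3 * ks⌋, Real.exp (-(u : ℝ) ^ 2 / (2 * ks ^ 2)) ∧
    ∑ u ∈ Finset.Icc (1 : ℤ) ⌊3 * ks⌋, Real.exp (-(u : ℝ) ^ 2 / (2 * ks ^ 2)) ≤ 5 / 4 * ks := by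
  have hk : 0 < ks := by linarith
  obtain ⟨n, hn⟩ := Int.eq_ofNat_of_zero_le (Int.floor_nonneg.2 (by linarith : 0 ≤ 3 * ks))
  have hn1 : (n : ℝ) ≤ 3 * ks := by
    have := Int.floor_le (3 * ks)
    rw [hn] at this
    exact_mod_cast this
  have hn2 : 3 * ks < n + 1 := by
    have := Int.lt_floor_add_one (3 * ks)
    rw [hn] at this
    exact_mod_cast this
  have hsum : ∑ u ∈ Finset.Icc (1 : ℤ) ⌊3 * ks⌋, Real.exp (-(u : ℝ) ^ 2 / (2 * ks ^ 2))
      = ∑ i ∈ Finset.range n, gauss (((i : ℝ) + 1) / ks) := by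
    rw [hn, ← sum_Icc_int_eq (fun x => gauss (x / ks))]
    refine Finset.sum_congr rfl fun u _ => ?_
    unfold gauss
    congr 1
    field_simp
  rw [hsum]
  have hanti : ∀ s : Set ℝ, s ⊆ Set.Ici 0 → AntitoneOn (fun x => gauss (x / ks)) s := by
    intro s hs x hx y _ hxy
    exact gauss_antitone (div_nonneg (hs hx) hk.le) (by gcongr)
  have hmono : ∀ a b c : ℝ, b ≤ c →
      ∫ t in a..b, gauss t ≤ ∫ t in a..c, gauss t := by
    intro a b c hbc
    rw [← intervalIntegral.integral_add_adjacent_intervals (gauss_intervalIntegrable a b)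
      (gauss_intervalIntegrable b c)]
    have := intervalIntegral.integral_nonneg (μ := MeasureTheory.volume) hbc
      (fun x _ => (gauss_pos x).le)
    linarith
  constructor
  · have h := AntitoneOn.integral_le_sum (x₀ := 1) (a := n) (f := fun x => gauss (x / ks))
      (hanti _ fun x hx => zero_le_one.trans hx.1)
    rw [intervalIntegral.integral_comp_div gauss hk.ne', smul_eq_mul] at h
    have h3 : (3 : ℝ) ≤ (1 + n) / ks := by
      rw [le_div_iff₀ hk]
      linarith
    have h4 := hmono (1 / ks) 3 _ h3
    have h5 := intervalIntegral.integral_add_adjacent_intervals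
      (gauss_intervalIntegrable 0 (1 / ks)) (gauss_intervalIntegrable (1 / ks) 3)
    have h6 : ∫ t in (0 : ℝ)..(1 / ks), gauss t ≤ 1 / ks := by
      have := intervalIntegral.integral_mono_on (by positivity : (0 : ℝ) ≤ 1 / ks)
        (gauss_intervalIntegrable 0 (1 / ks)) (intervalIntegrable_const (c := (1 : ℝ)))
        (fun x _ => gauss_le_one x)
      simpa using this
    have h7 : 1 / ks ≤ 1 / 5 := by gcongr
    have h8 : 1 ≤ ∫ t in (1 / ks)..((1 + n) / ks), gauss t := by
      linarith [gauss_integral_lower]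
    have h9 : ks * 1 ≤ ks * ∫ t in (1 / ks)..((1 + n) / ks), gauss t := by gcongr
    simp only [add_comm (1 : ℝ)] at h h9
    linarith
  · have h := AntitoneOn.sum_le_integral (x₀ := 0) (a := n) (f := fun x => gauss (x / ks))
      (hanti _ fun x hx => hx.1)
    rw [intervalIntegral.integral_comp_div gauss hk.ne', smul_eq_mul] at h
    simp only [zero_add, zero_div, Nat.cast_add, Nat.cast_one] at h
    have h3 : n / ks ≤ (3 : ℝ) := by
      rw [div_le_iff₀ hk]
      linarith
    have h4 : ∫ t in (0 : ℝ)..(n / ks), gauss t ≤ 5 / 4 :=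
      (hmono 0 _ 3 h3).trans gauss_integral_upper
    have h9 : ks * ∫ t in (0 : ℝ)..(n / ks), gauss t ≤ ks * (5 / 4) := by gcongr
    linarith

/-- Lemma: bounds on `Δ_{i,j} = (1 + 2 Σ_{1 ≤ u ≤ 3k_s} exp(−u²/(2k_s²)))²` for an interior
pixel: `(2k_s+1)² ≤ Δ ≤ (5k_s+2)²/4`. -/
theorem Delta_bounds (ks : ℝ) (hks : 5 ≤ ks) :
    (2 * ks + 1) ^ 2 ≤
        (1 + 2 * ∑ u ∈ Finset.Icc (1 : ℤ) ⌊3 * ks⌋,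
          Real.exp (-(u : ℝ) ^ 2 / (2 * ks ^ 2))) ^ 2 ∧
      (1 + 2 * ∑ u ∈ Finset.Icc (1 : ℤ) ⌊3 * ks⌋,
          Real.exp (-(u : ℝ) ^ 2 / (2 * ks ^ 2))) ^ 2 ≤ (5 * ks + 2) ^ 2 / 4 := by
  obtain ⟨h1, h2⟩ := sum_bounds ks hks
  constructor
  · exact pow_le_pow_left₀ (by linarith) (by linarith) 2
  · rw [show (5 * ks + 2) ^ 2 / 4 = (1 + 2 * (5 / 4 * ks)) ^ 2 by ring]
    exact pow_le_pow_left₀ (by linarith) (by linarith) 2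
end

section
/- Let k_s ≥ 5 be a real number. Then (1 + 2·Σ_{u∈ℤ, 1 ≤ u ≤ 3k_s} exp(−u²/k_s²))² ≤ (1 + 2·Σ_{u∈ℤ, 1 ≤ u ≤ 3k_s} exp(−u²/(2k_s²)))⁴ / (4k_s²). -/
/-!
Write `A = 1 + 2 ∑ exp (-u²/k²)` and `B = 1 + 2 ∑ exp (-u²/(2k²))`; the claim is the square of
`2 k A ≤ B²`. Both sums are compared with integrals of the (decreasing) summand.

* `A ≤ 1 + k √π ≤ 1 + 1.78 k`, by the Gaussian integral over the half line.
* `B ≥ 2 ∫₀^{2k} exp (-x²/(2k²)) dx - 1 ≥ 2.27 k - 1`, where the integrand is bounded below by the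
  polynomial `(1 - x²/(8k²))⁴`.

For `k ≥ 5` this suffices, since `(2.27 k - 1)² - 2 k (1 + 1.78 k) = 1.5929 k² - 6.54 k + 1 ≥ 0`.
-/

open Real

lemma sum_Icc_int_eq_sum_range (f : ℝ → ℝ) (N : ℕ) :
    ∑ u ∈ Finset.Icc (1 : ℤ) N, f u = ∑ i ∈ Finset.range N, f (0 + ((i + 1 : ℕ) : ℝ)) := by
  symm
  refine Finset.sum_bij (fun i _ => ((i : ℤ) + 1)) ?_ ?_ ?_ ?_
  · intro i hi
    simp only [Finset.mem_range, Finset.mem_Icc] at *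
    omega
  · intro i _ j _ h
    simpa using h
  · intro b hb
    simp only [Finset.mem_Icc] at hb
    refine ⟨(b - 1).toNat, ?_, ?_⟩
    · simp only [Finset.mem_range]; omega
    · omega
  · intro i _
    simp

lemma antitoneOn_gaussian {b : ℝ} (hb : 0 ≤ b) (s : Set ℝ) (hs : ∀ x ∈ s, 0 ≤ x) :
    AntitoneOn (fun x : ℝ => Real.exp (-b * x ^ 2)) s := by
  intro x hx y hy hxy
  have h : x ^ 2 ≤ y ^ 2 := pow_le_pow_left₀ (hs x hx) hxy 2
  have := mul_le_mul_of_nonneg_left h hb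
  apply Real.exp_le_exp.mpr
  linarith

lemma sum_gaussian_le {k : ℝ} (hk : 0 < k) (N : ℕ) :
    2 * ∑ i ∈ Finset.range N, Real.exp (-(1 / k ^ 2) * (0 + ((i + 1 : ℕ) : ℝ)) ^ 2)
      ≤ 1.78 * k := by
  have hb : 0 < 1 / k ^ 2 := by positivity
  have h1 := AntitoneOn.sum_le_integral (x₀ := 0) (a := N)
    (antitoneOn_gaussian hb.le (Set.Icc 0 (0 + (N : ℝ))) (fun x hx => hx.1))
  have h2 : ∫ x in (0 : ℝ)..(0 + (N : ℝ)), Real.exp (-(1 / k ^ 2) * x ^ 2)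
      ≤ ∫ x in Set.Ioi (0 : ℝ), Real.exp (-(1 / k ^ 2) * x ^ 2) := by
    rw [intervalIntegral.integral_of_le (by positivity)]
    refine MeasureTheory.setIntegral_mono_set (integrable_exp_neg_mul_sq hb).integrableOn
      (Filter.Eventually.of_forall fun x => (Real.exp_pos _).le) ?_
    exact (Set.Ioc_subset_Ioi_self).eventuallyLE
  rw [integral_gaussian_Ioi] at h2
  have h3 : √(Real.pi / (1 / k ^ 2)) ≤ 1.78 * k := by
    rw [Real.sqrt_le_left (by positivity)]
    have := Real.pi_lt_d2
    have hk2 : 0 < k ^ 2 := by positivity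
    rw [div_div_eq_mul_div, div_one]
    nlinarith
  linarith

/-- The constant is `∫₀² (1 - t²/8)⁴ dt = 1.1377…`, rounded down. -/
lemma le_integral_gaussian {k : ℝ} (hk : 0 < k) :
    1.135 * k ≤ ∫ x in (0 : ℝ)..(2 * k), Real.exp (-(1 / (2 * k ^ 2)) * x ^ 2) := by
  have hpoly : ∫ x in (0 : ℝ)..(2 * k), (1 - 1 / (8 * k ^ 2) * x ^ 2) ^ 4
      = (2 * (1 - 2 / 3 + 3 / 10 - 1 / 14 + 1 / 144)) * k := by
    set c : ℝ := 1 / (8 * k ^ 2) with hc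
    have hder : ∀ x ∈ Set.uIcc (0 : ℝ) (2 * k),
        HasDerivAt (fun x : ℝ => x - 4 * c / 3 * x ^ 3 + 6 * c ^ 2 / 5 * x ^ 5
          - 4 * c ^ 3 / 7 * x ^ 7 + c ^ 4 / 9 * x ^ 9) ((1 - c * x ^ 2) ^ 4) x := by
      intro x _
      have h := ((((hasDerivAt_id x).sub ((hasDerivAt_pow 3 x).const_mul (4 * c / 3))).add
        ((hasDerivAt_pow 5 x).const_mul (6 * c ^ 2 / 5))).sub
        ((hasDerivAt_pow 7 x).const_mul (4 * c ^ 3 / 7))).add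
        ((hasDerivAt_pow 9 x).const_mul (c ^ 4 / 9))
      refine h.congr_deriv ?_
      push_cast
      ring
    rw [intervalIntegral.integral_eq_sub_of_hasDerivAt hder
      (Continuous.intervalIntegrable (by fun_prop) _ _), hc]
    field_simp
    ring
  have hmono : ∫ x in (0 : ℝ)..(2 * k), (1 - 1 / (8 * k ^ 2) * x ^ 2) ^ 4
      ≤ ∫ x in (0 : ℝ)..(2 * k), Real.exp (-(1 / (2 * k ^ 2)) * x ^ 2) := by
    refine intervalIntegral.integral_mono_on (by positivity)
      (Continuous.intervalIntegrable (by fun_prop) _ _)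
      (Continuous.intervalIntegrable (by fun_prop) _ _) ?_
    intro x hx
    have hle : 1 / (8 * k ^ 2) * x ^ 2 ≤ 1 := by
      rw [div_mul_eq_mul_div, div_le_one (by positivity)]
      nlinarith [hx.1, hx.2]
    have hexp : 1 - 1 / (8 * k ^ 2) * x ^ 2 ≤ Real.exp (-(1 / (8 * k ^ 2) * x ^ 2)) := by
      linarith [Real.add_one_le_exp (-(1 / (8 * k ^ 2) * x ^ 2))]
    refine (pow_le_pow_left₀ (by linarith) hexp 4).trans_eq ?_
    rw [← Real.exp_nat_mul]
    congr 1
    push_cast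
    field_simp
    ring
  rw [hpoly] at hmono
  refine le_trans ?_ hmono
  exact mul_le_mul_of_nonneg_right (by norm_num) hk.le

lemma le_sum_gaussian {k : ℝ} (hk : 0 < k) (N : ℕ) (hN : 2 * k ≤ N + 1) :
    2.27 * k - 2 ≤
      2 * ∑ i ∈ Finset.range N, Real.exp (-(1 / (2 * k ^ 2)) * (0 + ((i + 1 : ℕ) : ℝ)) ^ 2) := by
  have hb : 0 ≤ 1 / (2 * k ^ 2) := by positivity
  have h1 := AntitoneOn.integral_le_sum (x₀ := 0) (a := N + 1)
    (antitoneOn_gaussian hb (Set.Icc 0 (0 + ((N + 1 : ℕ) : ℝ))) (fun x hx => hx.1))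
  rw [Finset.sum_range_succ'] at h1
  have h2 : ∫ x in (0 : ℝ)..(2 * k), Real.exp (-(1 / (2 * k ^ 2)) * x ^ 2)
      ≤ ∫ x in (0 : ℝ)..(0 + ((N + 1 : ℕ) : ℝ)), Real.exp (-(1 / (2 * k ^ 2)) * x ^ 2) := by
    refine intervalIntegral.integral_mono_interval le_rfl (by positivity)
      (by push_cast; linarith) (Filter.Eventually.of_forall fun x => (Real.exp_pos _).le)
      (Continuous.intervalIntegrable (by fun_prop) _ _)
  have h3 := le_integral_gaussian hk
  have h4 : Real.exp (-(1 / (2 * k ^ 2)) * (0 + ((0 : ℕ) : ℝ)) ^ 2) = 1 := by simp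
  linarith

/-- Lemma: the sum of squared kernel weights is negligible compared with the squared total
weight: `Σ δ² ≤ Δ²/(4k_s²)` for an interior pixel. -/
theorem sum_of_squares_negligible (ks : ℝ) (hks : 5 ≤ ks) :
    (1 + 2 * ∑ u ∈ Finset.Icc (1 : ℤ) ⌊3 * ks⌋,
        Real.exp (-(u : ℝ) ^ 2 / ks ^ 2)) ^ 2 ≤
      (1 + 2 * ∑ u ∈ Finset.Icc (1 : ℤ) ⌊3 * ks⌋,
        Real.exp (-(u : ℝ) ^ 2 / (2 * ks ^ 2))) ^ 4 / (4 * ks ^ 2) := by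
  have hk : 0 < ks := by linarith
  obtain ⟨N, hN⟩ : ∃ N : ℕ, ⌊3 * ks⌋ = N :=
    ⟨⌊3 * ks⌋.toNat, (Int.toNat_of_nonneg (Int.floor_nonneg.mpr (by positivity))).symm⟩
  have hN' : 2 * ks ≤ N + 1 := by
    have h := Int.lt_floor_add_one (3 * ks)
    rw [hN] at h
    push_cast at h
    linarith
  have hA : ∀ c : ℝ, ∑ u ∈ Finset.Icc (1 : ℤ) ⌊3 * ks⌋, Real.exp (-(u : ℝ) ^ 2 / c)
      = ∑ i ∈ Finset.range N, Real.exp (-(1 / c) * (0 + ((i + 1 : ℕ) : ℝ)) ^ 2) := by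
    intro c
    rw [hN, ← sum_Icc_int_eq_sum_range (fun x => Real.exp (-(1 / c) * x ^ 2)) N]
    refine Finset.sum_congr rfl fun u _ => ?_
    congr 1
    ring
  rw [hA, hA]
  have h1 := sum_gaussian_le hk N
  have h2 := le_sum_gaussian hk N hN'
  have h0 : 0 ≤ ∑ i ∈ Finset.range N,
      Real.exp (-(1 / ks ^ 2) * (0 + ((i + 1 : ℕ) : ℝ)) ^ 2) :=
    Finset.sum_nonneg fun i _ => (Real.exp_pos _).le
  set S := ∑ i ∈ Finset.range N, Real.exp (-(1 / ks ^ 2) * (0 + ((i + 1 : ℕ) : ℝ)) ^ 2)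
  set T := ∑ i ∈ Finset.range N, Real.exp (-(1 / (2 * ks ^ 2)) * (0 + ((i + 1 : ℕ) : ℝ)) ^ 2)
  have hB : (2.27 * ks - 1) ^ 2 ≤ (1 + 2 * T) ^ 2 :=
    pow_le_pow_left₀ (by linarith) (by linarith) 2
  have hA' : 2 * ks * (1 + 2 * S) ≤ 2 * ks * (1 + 1.78 * ks) :=
    mul_le_mul_of_nonneg_left (by linarith) (by positivity)
  have key : 2 * ks * (1 + 2 * S) ≤ (1 + 2 * T) ^ 2 := by nlinarith
  rw [le_div_iff₀ (by positivity)]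
  calc (1 + 2 * S) ^ 2 * (4 * ks ^ 2) = (2 * ks * (1 + 2 * S)) ^ 2 := by ring
    _ ≤ ((1 + 2 * T) ^ 2) ^ 2 := pow_le_pow_left₀ (by positivity) key 2
    _ = (1 + 2 * T) ^ 4 := by ring
end

section
/- Define ψ₁(t) = (1+4t)^{−3/2} − (1+2t)^{−3} for t ≥ 0. Then ψ₁(t) ≥ 0 for all t ≥ 0, and for all t ∈ [0, 1/25] one has 4t² ≤ ψ₁(t) ≤ 6t². -/
/-!
With `s = √(1 + 4t)` one has `t = (s² - 1) / 4` and `ψ₁(t) = 1/s³ - 8/(1 + s²)³`. Since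
`1 + s² - 2s = (s - 1)²`, factoring a difference of cubes gives
`ψ₁(t) = (s - 1)² N(s) / (s³ (1 + s²)³)` with `N(s) = (1 + s²)² + 2s(1 + s²) + 4s² > 0`, which is
nonnegative. As `t² = (s - 1)² (s + 1)² / 16`, the factor `(s - 1)²` cancels and the two bounds
become polynomial inequalities in `s`. The upper one holds for all `s ≥ 1`. The lower one is
`(s + 1)² s³ (1 + s²)³ ≤ 4 N(s)`; it follows from `N(s) ≥ 12 s²` and
`(s + 1)² s (1 + s²)³ ≤ 48`, the latter by monotonicity up to `1.0771 > √(1 + 4/25)`.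
-/

open Real

/-- `ψ₁` as a rational function of `s = √(1 + 4t)`, with the double zero at `s = 1` factored out. -/
lemma psi1_eq (t : ℝ) (ht : 0 ≤ t) : ∃ s : ℝ, 1 ≤ s ∧ s ^ 2 = 1 + 4 * t ∧
    (1 + 4 * t) ^ (-(3 : ℝ) / 2) - 1 / (1 + 2 * t) ^ 3 =
      (s - 1) ^ 2 * (((1 + s ^ 2) ^ 2 + 2 * s * (1 + s ^ 2) + 4 * s ^ 2) /
        (s ^ 3 * (1 + s ^ 2) ^ 3)) := by
  have hs2 : √(1 + 4 * t) ^ 2 = 1 + 4 * t := Real.sq_sqrt (by linarith)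
  have hs1 : 1 ≤ √(1 + 4 * t) := Real.one_le_sqrt.2 (by linarith)
  generalize √(1 + 4 * t) = s at hs1 hs2
  have hs0 : 0 < s := by linarith
  refine ⟨s, hs1, hs2, ?_⟩
  have hpow : (1 + 4 * t) ^ (-(3 : ℝ) / 2) = 1 / s ^ 3 := by
    rw [← hs2, ← Real.rpow_natCast s 2, ← Real.rpow_mul hs0.le, one_div,
      ← Real.rpow_natCast s 3, ← Real.rpow_neg hs0.le]
    norm_num
  have ht2 : 1 + 2 * t = (1 + s ^ 2) / 2 := by rw [hs2]; ring
  rw [hpow, ht2]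
  field_simp
  ring

/-- Lemma: with `ψ₁(t) = (1+4t)^{−3/2} − (1+2t)^{−3}`, one has `ψ₁(t) ≥ 0` for all `t ≥ 0`,
and `4t² ≤ ψ₁(t) ≤ 6t²` on `[0, 1/25]`. -/
theorem psi1_bounds :
    (∀ t : ℝ, 0 ≤ t → 0 ≤ (1 + 4 * t) ^ (-(3 : ℝ) / 2) - 1 / (1 + 2 * t) ^ 3) ∧
    (∀ t : ℝ, 0 ≤ t → t ≤ 1 / 25 →
      4 * t ^ 2 ≤ (1 + 4 * t) ^ (-(3 : ℝ) / 2) - 1 / (1 + 2 * t) ^ 3 ∧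
        (1 + 4 * t) ^ (-(3 : ℝ) / 2) - 1 / (1 + 2 * t) ^ 3 ≤ 6 * t ^ 2) := by
  refine ⟨fun t ht => ?_, fun t ht ht' => ?_⟩
  · obtain ⟨s, hs1, -, h⟩ := psi1_eq t ht
    rw [h]
    positivity
  · obtain ⟨s, hs1, hs2, h⟩ := psi1_eq t ht
    have hs0 : 0 < s := by linarith
    have htt : t ^ 2 = (s - 1) ^ 2 * ((s + 1) ^ 2 / 16) := by
      have : t = (s ^ 2 - 1) / 4 := by rw [hs2]; ring
      rw [this]; ring
    rw [h, htt, mul_left_comm, mul_left_comm 6]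
    constructor
    · refine mul_le_mul_of_nonneg_left ?_ (sq_nonneg _)
      rw [le_div_iff₀ (by positivity)]
      have hs3 : s ≤ 1.0771 := by nlinarith
      have hmono : (s + 1) ^ 2 * s * (1 + s ^ 2) ^ 3 ≤ 48 :=
        calc (s + 1) ^ 2 * s * (1 + s ^ 2) ^ 3
            ≤ (1.0771 + 1) ^ 2 * 1.0771 * (1 + 1.0771 ^ 2) ^ 3 := by gcongr
          _ ≤ 48 := by norm_num
      have hN : 12 * s ^ 2 ≤ (1 + s ^ 2) ^ 2 + 2 * s * (1 + s ^ 2) + 4 * s ^ 2 := by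
        have h2 : 2 * s ≤ 1 + s ^ 2 := by nlinarith [sq_nonneg (s - 1)]
        nlinarith
      nlinarith [mul_le_mul_of_nonneg_left hmono (sq_nonneg s)]
    · refine mul_le_mul_of_nonneg_left ?_ (sq_nonneg _)
      rw [div_le_iff₀ (by positivity)]
      -- in the variable `u = s - 1 ≥ 0` the difference of the two sides has only
      -- nonnegative coefficients
      obtain ⟨u, rfl⟩ : ∃ u, s = 1 + u := ⟨s - 1, by ring⟩
      have hu : 0 ≤ u := by linarith
      rw [← sub_nonneg]
      ring_nf
      positivity
end

section
/- Define ψ₂(t) = (1+t)^{−3/2}(1+3t)^{−3/2} − (1+2t)^{−3} for t ≥ 0. Then ψ₂(t) ≥ 0 for all t ≥ 0, and for all t ∈ [0, 1/25] one has t² ≤ ψ₂(t) ≤ (3/2)t². -/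
/-!
Put `u = 1 + 2t` and `s = √((1+t)(1+3t))`, so that `s² = u² - t²` and `1 ≤ s ≤ u`. The function
in question is `1/s³ - 1/u³`, and cancelling `u - s = t² / (u + s)` gives
`1/s³ - 1/u³ = t² (u² + us + s²) / ((u + s) s³ u³)`.
Nonnegativity is then clear. The upper bound follows from `1 ≤ s ≤ u`, and the lower bound from
`u² + us + s² ≥ (3/2)(u + s)s` together with `s² u³ ≤ u⁵ ≤ (27/25)⁵ ≤ 3/2` for `t ≤ 1/25`.
-/

open Real

/-- The factored form of `ψ₂`, with `s = √((1+t)(1+3t))` and `u = 1 + 2t`. -/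
lemma psi2_factored (t : ℝ) (ht : 0 ≤ t) : ∃ s u : ℝ, u = 1 + 2 * t ∧ 1 ≤ s ∧ s ≤ u ∧
    (1 + t) ^ (-(3 : ℝ) / 2) * (1 + 3 * t) ^ (-(3 : ℝ) / 2) - 1 / (1 + 2 * t) ^ 3 =
      t ^ 2 * ((u ^ 2 + u * s + s ^ 2) / ((u + s) * s ^ 3 * u ^ 3)) := by
  have hP : 0 ≤ (1 + t) * (1 + 3 * t) := by positivity
  have hs2 : √((1 + t) * (1 + 3 * t)) ^ 2 = (1 + t) * (1 + 3 * t) := Real.sq_sqrt hP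
  have hs1 : 1 ≤ √((1 + t) * (1 + 3 * t)) := Real.one_le_sqrt.mpr (by nlinarith)
  have hpow : (1 + t) ^ (-(3 : ℝ) / 2) * (1 + 3 * t) ^ (-(3 : ℝ) / 2)
      = 1 / √((1 + t) * (1 + 3 * t)) ^ 3 := by
    rw [← Real.mul_rpow (by positivity) (by positivity), Real.sqrt_eq_rpow, ← Real.rpow_natCast,
      ← Real.rpow_mul hP, one_div, ← Real.rpow_neg hP]
    norm_num
  rw [hpow]
  generalize √((1 + t) * (1 + 3 * t)) = s at hs1 hs2
  have hs0 : 0 < s := by linarith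
  refine ⟨s, 1 + 2 * t, rfl, hs1, by nlinarith, ?_⟩
  obtain ⟨u, hu⟩ : ∃ u, u = 1 + 2 * t := ⟨_, rfl⟩
  have hu0 : 0 < u := by linarith
  have ht2 : t ^ 2 = u ^ 2 - s ^ 2 := by rw [hs2, hu]; ring
  rw [← hu, ht2]
  field_simp
  ring

/-- Lemma: with `ψ₂(t) = (1+t)^{−3/2}(1+3t)^{−3/2} − (1+2t)^{−3}`, one has `ψ₂(t) ≥ 0` for
all `t ≥ 0`, and `t² ≤ ψ₂(t) ≤ (3/2)t²` on `[0, 1/25]`. -/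
theorem psi2_bounds :
    (∀ t : ℝ, 0 ≤ t →
      0 ≤ (1 + t) ^ (-(3 : ℝ) / 2) * (1 + 3 * t) ^ (-(3 : ℝ) / 2) - 1 / (1 + 2 * t) ^ 3) ∧
    (∀ t : ℝ, 0 ≤ t → t ≤ 1 / 25 →
      t ^ 2 ≤ (1 + t) ^ (-(3 : ℝ) / 2) * (1 + 3 * t) ^ (-(3 : ℝ) / 2) - 1 / (1 + 2 * t) ^ 3 ∧
        (1 + t) ^ (-(3 : ℝ) / 2) * (1 + 3 * t) ^ (-(3 : ℝ) / 2) - 1 / (1 + 2 * t) ^ 3 ≤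
          3 / 2 * t ^ 2) := by
  refine ⟨fun t ht => ?_, fun t ht ht' => ?_⟩
  · obtain ⟨s, u, -, hs, hsu, h⟩ := psi2_factored t ht
    have hs0 : 0 < s := by linarith
    have hu0 : 0 < u := by linarith
    rw [h]
    positivity
  · obtain ⟨s, u, hu, hs, hsu, h⟩ := psi2_factored t ht
    have hs0 : 0 < s := by linarith
    have hu0 : 0 < u := by linarith
    have hu1 : 1 ≤ u := by linarith
    have hD : 0 < (u + s) * s ^ 3 * u ^ 3 := by positivity
    rw [h]
    constructor
    · refine le_mul_of_one_le_right (sq_nonneg t) ((one_le_div hD).mpr ?_)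
      have hu5 : s ^ 2 * u ^ 3 ≤ 3 / 2 := by
        calc s ^ 2 * u ^ 3 ≤ u ^ 2 * u ^ 3 := by gcongr
          _ = u ^ 5 := by ring
          _ ≤ (27 / 25) ^ 5 := by gcongr; linarith
          _ ≤ 3 / 2 := by norm_num
      calc (u + s) * s ^ 3 * u ^ 3 = (u + s) * s * (s ^ 2 * u ^ 3) := by ring
        _ ≤ (u + s) * s * (3 / 2) := by gcongr
        _ ≤ u ^ 2 + u * s + s ^ 2 := by nlinarith
    · rw [mul_comm]
      refine mul_le_mul_of_nonneg_right ((div_le_iff₀ hD).mpr ?_) (sq_nonneg t)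
      have hu3 : u ≤ s ^ 3 * u ^ 3 :=
        calc u = 1 * u ^ 1 := by ring
          _ ≤ s ^ 3 * u ^ 3 := by
            gcongr
            · exact one_le_pow₀ hs
            · norm_num
      calc u ^ 2 + u * s + s ^ 2 ≤ 3 / 2 * ((u + s) * u) := by nlinarith
        _ ≤ 3 / 2 * ((u + s) * (s ^ 3 * u ^ 3)) := by gcongr
        _ = 3 / 2 * ((u + s) * s ^ 3 * u ^ 3) := by ring
end
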